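/- arXiv:1703.10205 — 2 statements merged into one kernel-verified Lean document; each statement's English description precedes it below -/
import Mathlib

section
/- Let G = (V, E) be a finite regular undirected graph with normalized adjacency matrix A, λ = ‖A − J‖ with 0 < λ < 1, let f_1, …, f_n : V → [0, 1] with μ_i = E_{v uniform}[f_i(v)] and Φ = μ_1 + ⋯ + μ_n > 0. Let (Y_1, …, Y_n) be the simple random walk on G and S_n = f_1(Y_1) + ⋯ + f_n(Y_n). Then for all t > 1/λ, Pr[S_n ≥ tΦ] ≤ (1/λ − (1 − λ)/(t^{1/2} λ^{3/2}))^{−tΦ} · exp(Φ · (1 − λ)(√(tλ) − 1)/λ). -/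
/-!
The argument bounds a moment generating function and applies Markov's inequality. With
`s = e^θ ∈ [1, 1/λ)` and `c = s - 1`, convexity gives `s ^ f ≤ 1 + c f` on `[0, 1]`, so it is enough
to bound the expectation of `∏ (1 + c fᵢ(Yᵢ))`. This expectation is the mean of the function
obtained from the constant `1` by alternately multiplying by `1 + c fᵢ` and applying `A`
(`sum_walkProb_mul_prod`).

The growth is controlled by the potential `(mean g)² + Var(g) / λ`. In the coordinates
`(mean, standard deviation / √λ)` one step is dominated by the symmetric matrix with rows
`(1 + cμ, β)` and `(β, λs)`, where `β² = λc²μ`. A Schur test with the weight vector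
`(1, β / (1 - λs))` shows that its norm is at most
`X = 1 + cμ + λc²μ / (1 - λs) = 1 + μ c (1 - λ) / (1 - λs) ≤ exp (μ c (1 - λ) / (1 - λs))`
(`potential_step`). Symmetrising through the factor `1 / λ` is what makes the norms of the steps
multiply without loss even though the `μᵢ` differ. Multiplying over `i` bounds the moment
generating function by `exp (Φ c (1 - λ) / (1 - λs))`, and the stated bound is Markov's inequality
at the `s` for which `(1 - λ) / (1 - λs) = √(tλ)`.
-/

open Finset

/-- The probability of a trajectory `y` of the simple random walk of length `n` on a
regular graph with normalized adjacency matrix `A`. -/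
noncomputable def walkProb {V : Type*} [Fintype V] (A : Matrix V V ℝ) {n : ℕ}
    (y : Fin n → V) : ℝ :=
  if n = 0 then 1
  else (1 / (Fintype.card V : ℝ)) *
    ∏ i : Fin n, if h : (i : ℕ) + 1 < n then A (y i) (y ⟨(i : ℕ) + 1, h⟩) else 1

/-- Expectation of a function of the trajectory of the simple random walk. -/
noncomputable def walkExp {V : Type*} [Fintype V] (A : Matrix V V ℝ) {n : ℕ}
    (F : (Fin n → V) → ℝ) : ℝ :=
  ∑ y : Fin n → V, walkProb A y * F y

/-- The operator norm of a matrix with respect to the Euclidean norm. -/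
noncomputable def opNorm {N : Type*} [Fintype N] [DecidableEq N]
    (M : Matrix N N ℝ) : ℝ :=
  ‖LinearMap.toContinuousLinearMap (Matrix.toEuclideanLin M)‖

/-- The mean of a function under the uniform distribution. -/
noncomputable def mean {V : Type*} [Fintype V] (g : V → ℝ) : ℝ :=
  (∑ v, g v) / (Fintype.card V : ℝ)

/-- The potential `(mean g)² + Var(g) / lam`. -/
noncomputable def potential {V : Type*} [Fintype V] (lam : ℝ) (g : V → ℝ) : ℝ :=
  mean g ^ 2 + mean (fun v => (g v - mean g) ^ 2) / lam

/-- `transfer A n h` is the function `A H₀ A H₁ ⋯ A Hₙ₋₁ 1`, where `Hᵢ` is multiplication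
by `h i`. -/
noncomputable def transfer {V : Type*} [Fintype V] (A : Matrix V V ℝ) :
    (n : ℕ) → (Fin n → V → ℝ) → V → ℝ
  | 0, _ => fun _ => 1
  | n + 1, h => fun v => ∑ w, A v w * (h 0 w * transfer A n (fun i => h i.succ) w)

/-! ### Means and the potential -/

section Mean

variable {V : Type*} [Fintype V]

lemma mean_add (g h : V → ℝ) : mean (fun v => g v + h v) = mean g + mean h := by
  simp [mean, Finset.sum_add_distrib, add_div]

lemma mean_const_mul (a : ℝ) (g : V → ℝ) : mean (fun v => a * g v) = a * mean g := by
  simp only [mean, ← Finset.mul_sum, mul_div_assoc]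

lemma mean_const [Nonempty V] (a : ℝ) : mean (fun _ : V => a) = a := by
  have : (Fintype.card V : ℝ) ≠ 0 := by exact_mod_cast Fintype.card_ne_zero
  simp [mean]

lemma mean_mono {g h : V → ℝ} (H : ∀ v, g v ≤ h v) : mean g ≤ mean h := by
  unfold mean
  gcongr with v
  exact H v

lemma mean_nonneg {g : V → ℝ} (H : ∀ v, 0 ≤ g v) : 0 ≤ mean g :=
  div_nonneg (Finset.sum_nonneg fun v _ => H v) (Nat.cast_nonneg _)

lemma mean_sub_mean [Nonempty V] (g : V → ℝ) : mean (fun v => g v - mean g) = 0 := by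
  have := mean_add g (fun _ => - mean g)
  rw [mean_const] at this
  simpa [sub_eq_add_neg] using this

lemma sq_mean_mul_le (g h : V → ℝ) :
    mean (fun v => g v * h v) ^ 2 ≤ mean (fun v => g v ^ 2) * mean (fun v => h v ^ 2) := by
  unfold mean
  rw [div_pow, div_mul_div_comm, ← sq]
  gcongr
  exact Finset.sum_mul_sq_le_sq_mul_sq _ _ _

/-- The mean minimises the mean squared deviation. -/
lemma variance_le [Nonempty V] (g : V → ℝ) (b : ℝ) :
    mean (fun v => (g v - mean g) ^ 2) ≤ mean (fun v => (g v - b) ^ 2) := by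
  have h1 : (fun v => (g v - b) ^ 2) = fun v => (g v - mean g) ^ 2 +
      (2 * (mean g - b) * (g v - mean g) + (mean g - b) ^ 2) := by
    funext v; ring
  rw [h1, mean_add, mean_add, mean_const_mul, mean_sub_mean, mean_const]
  nlinarith [sq_nonneg (mean g - b)]

/-- The parallel half of the Schur test: `a` is the mean, `α` the variance before the step, `z` the
correlation of `f` with the deviation from the mean, and `e = 1 - λs`. -/
lemma schur_parallel {lam c m a z α e : ℝ} (hl : 0 < lam) (hc : 0 ≤ c) (hm : 0 ≤ m)
    (hα : 0 ≤ α) (he : 0 < e) (hz : z ^ 2 ≤ m * α) :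
    ((1 + c * m) * a + c * z) ^ 2 ≤
      (1 + c * m + lam * c ^ 2 * m / e) * ((1 + c * m) * a ^ 2 + e * (α / lam)) := by
  set p := lam * c ^ 2 * m / e with hp
  set q := e * (α / lam) with hq
  have hp0 : 0 ≤ p := by positivity
  have hq0 : 0 ≤ q := by positivity
  have hpq : p * q = c ^ 2 * (m * α) := by rw [hp, hq]; field_simp
  have hz2 : (c * z) ^ 2 ≤ p * q := by
    rw [hpq, mul_pow]; gcongr
  have hB : 0 ≤ 1 + c * m := by positivity
  -- AM-GM for `p * a ^ 2` and `q`, since `(c * z) ^ 2 ≤ p * q`.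
  have key : 2 * a * (c * z) ≤ p * a ^ 2 + q := by
    have h4 : (2 * a * (c * z)) ^ 2 ≤ (p * a ^ 2 + q) ^ 2 := by
      nlinarith [sq_nonneg (p * a ^ 2 - q), mul_le_mul_of_nonneg_left hz2 (sq_nonneg a)]
    exact le_of_abs_le (abs_le_of_sq_le_sq h4 (by positivity))
  nlinarith [mul_le_mul_of_nonneg_left key hB]

/-- The orthogonal half of the Schur test, pointwise. -/
lemma schur_orthogonal {lam c f a p : ℝ} (hl : 0 < lam) (hc : 0 ≤ c) (hf0 : 0 ≤ f) (hf1 : f ≤ 1)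
    (he : 0 < 1 - lam * (1 + c)) :
    lam * (c * f * a + (1 + c * f) * p) ^ 2 ≤
      lam * c ^ 2 * a ^ 2 / (1 - lam * (1 + c)) * f + (1 + c) * p ^ 2 := by
  have hs : 0 < 1 + c := by positivity
  have hk : 0 < lam * (1 + c) := by positivity
  -- Cauchy-Schwarz with the weights `1 - lam * (1 + c)` and `lam * (1 + c)`, which sum to `1`.
  have h1 : (c * f * a + (1 + c * f) * p) ^ 2 ≤
      (c * f * a) ^ 2 / (1 - lam * (1 + c)) + ((1 + c * f) * p) ^ 2 / (lam * (1 + c)) := by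
    generalize c * f * a = x
    generalize (1 + c * f) * p = w
    generalize lam * (1 + c) = k at he hk
    rw [div_add_div _ _ he.ne' hk.ne', le_div_iff₀ (by positivity)]
    nlinarith [sq_nonneg (k * x - (1 - k) * w)]
  have h2 : (c * f * a) ^ 2 ≤ c ^ 2 * a ^ 2 * f := by
    have : f ^ 2 ≤ f := by nlinarith
    calc (c * f * a) ^ 2 = c ^ 2 * a ^ 2 * f ^ 2 := by ring
      _ ≤ _ := by gcongr
  have h3 : ((1 + c * f) * p) ^ 2 ≤ (1 + c) ^ 2 * p ^ 2 := by
    rw [mul_pow]; gcongr; nlinarith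
  calc lam * (c * f * a + (1 + c * f) * p) ^ 2
      ≤ lam * (c ^ 2 * a ^ 2 * f / (1 - lam * (1 + c)) +
          (1 + c) ^ 2 * p ^ 2 / (lam * (1 + c))) := by
        gcongr
        refine h1.trans ?_
        gcongr
    _ = _ := by field_simp

/-- Multiplying by `1 + c f` and applying an operator that preserves the mean and contracts the
variance by `lam ^ 2` multiplies the potential by at most `X ^ 2`. -/
lemma potential_step [Nonempty V] {lam c : ℝ} (hl : 0 < lam) (hc : 0 ≤ c)
    (he : 0 < 1 - lam * (1 + c)) (f g k : V → ℝ) (hf : ∀ v, f v ∈ Set.Icc (0 : ℝ) 1)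
    (hmean : mean k = mean (fun v => (1 + c * f v) * g v))
    (hvar : mean (fun v => (k v - mean k) ^ 2) ≤ lam ^ 2 *
      mean (fun v => ((1 + c * f v) * g v - mean (fun v => (1 + c * f v) * g v)) ^ 2)) :
    potential lam k ≤
      (1 + c * mean f + lam * c ^ 2 * mean f / (1 - lam * (1 + c))) ^ 2 * potential lam g := by
  set e := 1 - lam * (1 + c) with hedef
  set a := mean g with ha
  set m := mean f with hm
  set α := mean (fun v => (g v - a) ^ 2) with hα
  set z := mean (fun v => f v * (g v - a)) with hz
  have hm0 : 0 ≤ m := mean_nonneg fun v => (hf v).1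
  have hα0 : 0 ≤ α := mean_nonneg fun v => sq_nonneg _
  have hzα : z ^ 2 ≤ m * α := by
    refine (sq_mean_mul_le _ _).trans ?_
    gcongr
    exact mean_mono fun v => by nlinarith [(hf v).1, (hf v).2]
  have hpar : mean (fun v => (1 + c * f v) * g v) = (1 + c * m) * a + c * z := by
    have h1 : (fun v => (1 + c * f v) * g v) =
        fun v => g v + (c * a * f v + c * (f v * (g v - a))) := by funext v; ring
    rw [h1, mean_add, mean_add, mean_const_mul, mean_const_mul]; ring
  have hperp : lam * mean (fun v => ((1 + c * f v) * g v -
      mean (fun v => (1 + c * f v) * g v)) ^ 2) ≤ lam * c ^ 2 * a ^ 2 / e * m + (1 + c) * α := by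
    calc _ ≤ lam * mean (fun v => ((1 + c * f v) * g v - a) ^ 2) := by
            gcongr; exact variance_le _ a
      _ = mean (fun v => lam * ((1 + c * f v) * g v - a) ^ 2) := (mean_const_mul _ _).symm
      _ ≤ mean (fun v => lam * c ^ 2 * a ^ 2 / e * f v + (1 + c) * (g v - a) ^ 2) := by
            refine mean_mono fun v => ?_
            have := schur_orthogonal (a := a) (p := g v - a) hl hc (hf v).1 (hf v).2 he
            refine le_trans (le_of_eq ?_) this
            ring
      _ = _ := by rw [mean_add, mean_const_mul, mean_const_mul]
  have hpar2 := schur_parallel (a := a) hl hc hm0 hα0 he hzα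
  set X := 1 + c * m + lam * c ^ 2 * m / e with hX
  have hβ : 0 ≤ lam * c ^ 2 * m / e := by positivity
  have hX1 : 1 ≤ X := by
    have : 0 ≤ c * m := by positivity
    linarith
  have hq0 : 0 ≤ α / lam := by positivity
  have hvar' : mean (fun v => (k v - mean k) ^ 2) / lam ≤
      lam * c ^ 2 * m / e * a ^ 2 + (1 - e) * (α / lam) := by
    rw [div_le_iff₀ hl]
    refine hvar.trans ?_
    calc _ = lam * (lam * mean (fun v => ((1 + c * f v) * g v -
      mean (fun v => (1 + c * f v) * g v)) ^ 2)) := by ring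
      _ ≤ lam * (lam * c ^ 2 * a ^ 2 / e * m + (1 + c) * α) := by gcongr
      _ = _ := by
        have : 1 - e = lam * (1 + c) := by rw [hedef]; ring
        rw [this]; field_simp
  unfold potential
  rw [hmean, hpar]
  rw [hmean, hpar] at hvar'
  have hfin : X * ((1 + c * m) * a ^ 2 + e * (α / lam)) +
      (lam * c ^ 2 * m / e * a ^ 2 + (1 - e) * (α / lam)) ≤ X ^ 2 * (a ^ 2 + α / lam) := by
    have h1 : lam * c ^ 2 * m / e = X - (1 + c * m) := by rw [hX]; ring
    rw [h1] at hβ ⊢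
    have he1 : 0 ≤ 1 - e := by rw [hedef]; ring_nf; positivity
    have i1 : 0 ≤ (X - 1) * (X - (1 + c * m)) * a ^ 2 :=
      mul_nonneg (mul_nonneg (by linarith) hβ) (sq_nonneg _)
    have i2 : 0 ≤ (X * (X - 1) + (X - 1) * (1 - e)) * (α / lam) :=
      mul_nonneg (add_nonneg (mul_nonneg (by linarith) (by linarith))
        (mul_nonneg (by linarith) he1)) hq0
    linarith
  linarith

end Mean

/-! ### Walk expectations and the moment generating function -/

section Walk

variable {V : Type*} [Fintype V]

/-- Expansion of `transfer` over the trajectories that continue a step out of `v`. -/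
lemma transfer_eq_sum (A : Matrix V V ℝ) (n : ℕ) (h : Fin n → V → ℝ) (v : V) :
    transfer A n h v = ∑ y : Fin n → V,
      (∏ i : Fin n, A ((Fin.cons v y : Fin (n + 1) → V) i.castSucc)
        ((Fin.cons v y : Fin (n + 1) → V) i.succ)) * ∏ i, h i (y i) := by
  induction n generalizing v with
  | zero => simp [transfer]
  | succ n ih =>
    rw [← (Fin.consEquiv fun _ : Fin (n + 1) => V).sum_comp, Fintype.sum_prod_type]
    simp only [transfer, Fin.consEquiv_apply]
    refine Finset.sum_congr rfl fun w _ => ?_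
    rw [ih, Finset.mul_sum, Finset.mul_sum]
    refine Finset.sum_congr rfl fun y _ => ?_
    change _ = (∏ i : Fin (n + 1), A ((Fin.cons v (Fin.cons w y : Fin (n + 1) → V) :
      Fin (n + 2) → V) i.castSucc) ((Fin.cons w y : Fin (n + 1) → V) i)) *
      ∏ i, h i ((Fin.cons w y : Fin (n + 1) → V) i)
    rw [Fin.prod_univ_succ (n := n), Fin.prod_univ_succ (n := n)]
    simp only [Fin.castSucc_zero, Fin.cons_zero, Fin.cons_succ, ← Fin.succ_castSucc]
    ring

lemma walkProb_succ (A : Matrix V V ℝ) (n : ℕ) (y : Fin (n + 1) → V) :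
    walkProb A y = 1 / (Fintype.card V : ℝ) * ∏ i : Fin n, A (y i.castSucc) (y i.succ) := by
  unfold walkProb
  rw [if_neg (Nat.succ_ne_zero n), Fin.prod_univ_castSucc]
  congr 1
  simp
  rfl

/-- Only the column sums of `A` matter here: the leading factor `A` in `transfer` preserves
the mean. -/
lemma sum_walkProb_mul_prod (A : Matrix V V ℝ) (hcol : ∀ w, ∑ v, A v w = 1) (n : ℕ)
    (h : Fin (n + 1) → V → ℝ) :
    ∑ y : Fin (n + 1) → V, walkProb A y * ∏ i, h i (y i) = mean (transfer A (n + 1) h) := by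
  have h1 : mean (transfer A (n + 1) h) =
      mean (fun w => h 0 w * transfer A n (fun i => h i.succ) w) := by
    unfold mean
    congr 1
    simp only [transfer]
    rw [Finset.sum_comm]
    refine Finset.sum_congr rfl fun w _ => ?_
    rw [← Finset.sum_mul, hcol, one_mul]
  rw [h1, ← (Fin.consEquiv fun _ : Fin (n + 1) => V).sum_comp, Fintype.sum_prod_type]
  unfold mean
  rw [Finset.sum_div]
  refine Finset.sum_congr rfl fun w _ => ?_
  rw [transfer_eq_sum, Finset.mul_sum, Finset.sum_div]
  refine Finset.sum_congr rfl fun y _ => ?_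
  rw [walkProb_succ, Fin.prod_univ_succ (n := n) (f := fun i => h i _)]
  simp only [Fin.consEquiv, Equiv.coe_fn_mk, Fin.cons_zero, Fin.cons_succ]
  ring

/-- Applying `A` preserves the mean and, as `J` kills mean-zero functions, contracts the variance by
the factor `‖A - J‖²`. -/
lemma variance_contract [DecidableEq V] [Nonempty V] (A J : Matrix V V ℝ)
    (hrow : ∀ v, ∑ w, A v w = 1) (hcol : ∀ w, ∑ v, A v w = 1)
    (hJ : ∀ u v, J u v = 1 / (Fintype.card V : ℝ)) (h k : V → ℝ)
    (hk : ∀ v, k v = ∑ w, A v w * h w) :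
    mean k = mean h ∧ mean (fun v => (k v - mean k) ^ 2) ≤
      opNorm (A - J) ^ 2 * mean (fun v => (h v - mean h) ^ 2) := by
  have hN : (Fintype.card V : ℝ) ≠ 0 := by exact_mod_cast Fintype.card_ne_zero
  have hmean : mean k = mean h := by
    unfold mean
    congr 1
    simp only [hk]
    rw [Finset.sum_comm]
    refine Finset.sum_congr rfl fun w _ => ?_
    rw [← Finset.sum_mul, hcol, one_mul]
  refine ⟨hmean, ?_⟩
  set p : V → ℝ := fun v => h v - mean h with hp
  have hp0 : ∑ v, p v = 0 := by
    have := mean_sub_mean h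
    unfold mean at this
    exact (div_eq_zero_iff.mp this).resolve_right hN
  have hdev : ∀ v, k v - mean k = ((A - J).mulVec p) v := by
    intro v
    have h1 : ((A - J).mulVec p) v = ∑ w, A v w * p w - ∑ w, J v w * p w := by
      simp [Matrix.mulVec, dotProduct, sub_mul]
    rw [h1]
    simp only [hJ]
    rw [← Finset.mul_sum, hp0, hmean, hk]
    simp [hp, mul_sub, ← Finset.sum_mul, hrow]
  have hop := (LinearMap.toContinuousLinearMap (Matrix.toEuclideanLin (A - J))).le_opNorm
    (WithLp.toLp 2 p)
  have hop2 := pow_le_pow_left₀ (norm_nonneg _) hop 2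
  rw [mul_pow, EuclideanSpace.norm_sq_eq, EuclideanSpace.norm_sq_eq] at hop2
  simp only [Real.norm_eq_abs, sq_abs] at hop2
  unfold mean at *
  rw [← mul_div_assoc]
  gcongr
  refine le_trans (le_of_eq ?_) hop2
  refine Finset.sum_congr rfl fun v _ => ?_
  beta_reduce
  rw [hdev]
  rfl

lemma potential_transfer_le [DecidableEq V] [Nonempty V] (A J : Matrix V V ℝ)
    (hrow : ∀ v, ∑ w, A v w = 1) (hcol : ∀ w, ∑ v, A v w = 1)
    (hJ : ∀ u v, J u v = 1 / (Fintype.card V : ℝ)) {c : ℝ} (hl : 0 < opNorm (A - J))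
    (hc : 0 ≤ c) (he : 0 < 1 - opNorm (A - J) * (1 + c)) (n : ℕ) (f : Fin n → V → ℝ)
    (hf : ∀ i v, f i v ∈ Set.Icc (0 : ℝ) 1) :
    potential (opNorm (A - J)) (transfer A n fun i v => 1 + c * f i v) ≤
      (∏ i, (1 + c * mean (f i) + opNorm (A - J) * c ^ 2 * mean (f i) /
        (1 - opNorm (A - J) * (1 + c)))) ^ 2 := by
  induction n with
  | zero => simp [transfer, potential, mean_const]
  | succ n ih =>
    obtain ⟨h1, h2⟩ := variance_contract A J hrow hcol hJ
      (fun w => (1 + c * f 0 w) * transfer A n (fun i v => 1 + c * f i.succ v) w)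
      (transfer A (n + 1) fun i v => 1 + c * f i v) (fun v => rfl)
    refine (potential_step hl hc he (f 0) _ _ (hf 0) h1 h2).trans ?_
    rw [Fin.prod_univ_succ, mul_pow]
    gcongr
    exact ih (fun i => f i.succ) fun i => hf i.succ

/-- The bound on the moment generating function. -/
lemma walk_mgf_le [DecidableEq V] [Nonempty V] (A J : Matrix V V ℝ)
    (hrow : ∀ v, ∑ w, A v w = 1) (hcol : ∀ w, ∑ v, A v w = 1)
    (hJ : ∀ u v, J u v = 1 / (Fintype.card V : ℝ)) {lam c : ℝ} (hlam : lam = opNorm (A - J))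
    (hl : 0 < lam) (hc : 0 ≤ c) (he : 0 < 1 - lam * (1 + c)) (n : ℕ) (f : Fin (n + 1) → V → ℝ)
    (hf : ∀ i v, f i v ∈ Set.Icc (0 : ℝ) 1) :
    ∑ y : Fin (n + 1) → V, walkProb A y * ∏ i, (1 + c * f i (y i)) ≤
      Real.exp ((∑ i, mean (f i)) * (c * (1 - lam) / (1 - lam * (1 + c)))) := by
  subst hlam
  set lam := opNorm (A - J)
  rw [sum_walkProb_mul_prod A hcol n fun i v => 1 + c * f i v]
  have hpot := potential_transfer_le A J hrow hcol hJ hl hc he (n + 1) f hf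
  have hm0 : ∀ i, 0 ≤ mean (f i) := fun i => mean_nonneg fun v => (hf i v).1
  have hX0 : ∀ i, 0 ≤ 1 + c * mean (f i) + lam * c ^ 2 * mean (f i) / (1 - lam * (1 + c)) := by
    intro i
    have := hm0 i
    positivity
  have h1 : mean (transfer A (n + 1) fun i v => 1 + c * f i v) ^ 2 ≤
      (∏ i, (1 + c * mean (f i) + lam * c ^ 2 * mean (f i) / (1 - lam * (1 + c)))) ^ 2 := by
    refine le_trans ?_ hpot
    unfold potential
    exact le_add_of_nonneg_right (div_nonneg (mean_nonneg fun v => sq_nonneg _) hl.le)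
  refine (le_of_abs_le (abs_le_of_sq_le_sq h1 (Finset.prod_nonneg fun i _ => hX0 i)) ).trans ?_
  rw [Finset.sum_mul, Real.exp_sum]
  refine Finset.prod_le_prod (fun i _ => hX0 i) fun i _ => ?_
  refine le_trans (le_of_eq ?_) (Real.add_one_le_exp _)
  field_simp
  ring

end Walk

/-! ### The tail bound -/

theorem expander_tail_bound
    {V : Type*} [Fintype V] [DecidableEq V] [Nonempty V]
    (G : SimpleGraph V) [DecidableRel G.Adj] (d : ℕ) (hd : 0 < d)
    (hreg : G.IsRegularOfDegree d)
    (A : Matrix V V ℝ)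
    (hA : ∀ u v, A u v = if G.Adj u v then (1 : ℝ) / d else 0)
    (J : Matrix V V ℝ) (hJ : ∀ u v, J u v = 1 / (Fintype.card V : ℝ))
    (lam : ℝ) (hlam : lam = opNorm (A - J)) (hlam0 : 0 < lam) (hlam1 : lam < 1)
    (n : ℕ) (f : Fin n → V → ℝ) (hf : ∀ i v, f i v ∈ Set.Icc (0 : ℝ) 1)
    (μ : Fin n → ℝ) (hμ : ∀ i, μ i = (∑ v, f i v) / (Fintype.card V : ℝ))
    (Φ : ℝ) (hΦ : Φ = ∑ i, μ i) (hΦpos : 0 < Φ)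
    (t : ℝ) (ht : 1 / lam < t) :
    walkExp A (fun y => if t * Φ ≤ ∑ i, f i (y i) then (1 : ℝ) else 0) ≤
      (1 / lam - (1 - lam) / (t ^ ((1 : ℝ) / 2) * lam ^ ((3 : ℝ) / 2))) ^ (-(t * Φ)) *
        Real.exp (Φ * (1 - lam) * (Real.sqrt (t * lam) - 1) / lam) := by
  subst hlam
  set lam := opNorm (A - J) with hlam
  obtain rfl | ⟨n, rfl⟩ : n = 0 ∨ ∃ m, n = m + 1 := by
    cases n with
    | zero => exact Or.inl rfl
    | succ m => exact Or.inr ⟨m, rfl⟩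
  · simp at hΦ
    exact absurd hΦpos (by simp [hΦ])
  have hd' : (d : ℝ) ≠ 0 := by positivity
  have hrow : ∀ v, ∑ w, A v w = 1 := by
    intro v
    simp only [hA]
    rw [← Finset.sum_filter, Finset.sum_const, ← SimpleGraph.neighborFinset_eq_filter,
      SimpleGraph.card_neighborFinset_eq_degree, hreg v]
    simp [hd']
  have hcol : ∀ w, ∑ v, A v w = 1 := by
    intro w
    rw [← hrow w]
    refine Finset.sum_congr rfl fun v _ => ?_
    simp only [hA, SimpleGraph.adj_comm G v w]
  have hA0 : ∀ u v, 0 ≤ A u v := by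
    intro u v
    rw [hA]
    split_ifs <;> positivity
  -- `r = √(tλ)` and the tilt `s` satisfy `(1 - λ) / (1 - λs) = r`.
  set r := Real.sqrt (t * lam) with hr
  have htl : 1 < t * lam := by rwa [div_lt_iff₀ hlam0] at ht
  have ht0 : 0 < t := lt_trans (by positivity) ht
  have hr1 : 1 < r := by
    rw [hr, Real.lt_sqrt (by norm_num)]; simpa using htl
  have hr0 : 0 < r := by linarith
  have hden : t ^ ((1 : ℝ) / 2) * lam ^ ((3 : ℝ) / 2) = r * lam := by
    have h32 : (3 : ℝ) / 2 = 1 / 2 + 1 := by norm_num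
    rw [h32, Real.rpow_add hlam0, Real.rpow_one, hr, Real.sqrt_eq_rpow,
      Real.mul_rpow ht0.le hlam0.le]
    ring
  rw [hden]
  set s := 1 / lam - (1 - lam) / (r * lam) with hs
  have hs1 : 1 - lam * s = (1 - lam) / r := by rw [hs]; field_simp; ring
  have he : 0 < 1 - lam * s := by
    rw [hs1]; exact div_pos (by linarith) hr0
  have hc : s - 1 = (1 - lam) * (r - 1) / (r * lam) := by rw [hs]; field_simp; ring
  have hc0 : 0 ≤ s - 1 := by
    rw [hc]
    exact div_nonneg (mul_nonneg (by linarith) (by linarith)) (by positivity)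
  have hspos : 0 < s := by linarith
  have hmgf := walk_mgf_le A J hrow hcol hJ hlam hlam0 hc0
    (by simpa using he) n f hf
  have hexp : (∑ i, mean (f i)) * ((s - 1) * (1 - lam) / (1 - lam * (1 + (s - 1)))) =
      Φ * (1 - lam) * (r - 1) / lam := by
    have h1 : ∑ i, mean (f i) = Φ := by
      rw [hΦ]; exact Finset.sum_congr rfl fun i _ => (hμ i).symm
    have hl1 : 1 - lam ≠ 0 := by linarith
    rw [h1, add_sub_cancel, hs1, hc]
    field_simp
  rw [hexp] at hmgf
  refine le_trans ?_ (mul_le_mul_of_nonneg_left hmgf (Real.rpow_nonneg hspos.le _))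
  unfold walkExp
  rw [Finset.mul_sum]
  refine Finset.sum_le_sum fun y _ => ?_
  have hprob : 0 ≤ walkProb A y := by
    rw [walkProb_succ]
    exact mul_nonneg (by positivity) (Finset.prod_nonneg fun i _ => hA0 _ _)
  -- Convexity of `x ↦ s ^ x` on `[0, 1]`, in the form of Bernoulli's inequality.
  have hfac : ∀ i, s ^ f i (y i) ≤ 1 + (s - 1) * f i (y i) := by
    intro i
    have := rpow_one_add_le_one_add_mul_self (s := s - 1) (by linarith)
      (hf i (y i)).1 (hf i (y i)).2
    rw [add_sub_cancel] at this
    linarith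
  have hprod : s ^ (∑ i, f i (y i)) ≤ ∏ i, (1 + (s - 1) * f i (y i)) := by
    rw [Real.rpow_sum_of_pos hspos]
    exact Finset.prod_le_prod (fun i _ => Real.rpow_nonneg hspos.le _) fun i _ => hfac i
  have hmarkov : (if t * Φ ≤ ∑ i, f i (y i) then (1 : ℝ) else 0) ≤
      s ^ (-(t * Φ)) * ∏ i, (1 + (s - 1) * f i (y i)) := by
    have h0 : 0 ≤ s ^ (∑ i, f i (y i)) := Real.rpow_nonneg hspos.le _
    split_ifs with hle
    · refine le_trans ?_ (mul_le_mul_of_nonneg_left hprod (Real.rpow_nonneg hspos.le _))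
      rw [← Real.rpow_add hspos]
      exact Real.one_le_rpow (by linarith) (by linarith)
    · exact mul_nonneg (Real.rpow_nonneg hspos.le _) (h0.trans hprod)
  calc _ ≤ walkProb A y * (s ^ (-(t * Φ)) * ∏ i, (1 + (s - 1) * f i (y i))) :=
        mul_le_mul_of_nonneg_left hmarkov hprob
    _ = _ := by ring
end

section
/- Let G = (V, E) be a finite regular undirected graph with normalized adjacency matrix A and λ = ‖A − J‖ with λ < 1. Let f_1, …, f_n : V → [0, 1] with μ_i = E_{v uniform}[f_i(v)] and Φ = μ_1 + ⋯ + μ_n. Let (Y_1, …, Y_n) be the simple random walk on G and Z_i = f_i(Y_i). For k ∈ [n], let W_k ⊆ [n]^k be the set of strictly increasing tuples w_1 < w_2 < ⋯ < w_k. Then E[ Σ_{w ∈ W_k} Z_{w_1} Z_{w_2} ⋯ Z_{w_k} ] ≤ Σ_{i=0}^{k−1} C(k−1, i) · Φ^{i+1} λ^{k−i−1} / ((i+1)! (1−λ)^{k−i−1}), where C(k−1, i) is the binomial coefficient. -/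
/-!
Write `N = |V|` and let `D_t` be multiplication by `f_t`. Splitting off the last chosen time, the
expected sum equals `(1/N) Σ_w 1ᵀ D_{w_k} A^{w_k - w_{k-1}} D_{w_{k-1}} ⋯ D_{w_1} 1`, summed over
increasing tuples `w` (`walkExp_elemSum`). Distribute each `D_t` as `√D_t √D_t`. For `g ≥ 1` one has
`A^g = J + (A - J)^g`, so `√D_t A^g √D_s` has norm at most `√(μ_s μ_t) + λ^g` (`vecNorm_gap_le`), and
the contribution of `w` is at most
`√(μ_{w_1} μ_{w_k}) ∏_j (√(μ_{w_j} μ_{w_{j+1}}) + λ^{w_{j+1} - w_j})`.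

Expand the product. Choosing the first term at `i` of the `k - 1` gaps cuts `w` into `i + 1` blocks,
and the term becomes the product over the blocks of `√(μ_start μ_end)` times the powers of `λ` over
the gaps inside blocks. By Cauchy–Schwarz (`gapSum_le`) the sum over `w` is at most the geometric
mean of the sums with weights `∏ μ_start` and `∏ μ_end`. Since the starts are increasing, and so are
the ends, each of these sums is at most `Φ^{i+1}/(i+1)! · (λ/(1-λ))^{k-1-i}`
(`sum_startSum_le`, `endSum_le`), and there are `C(k-1, i)` choices of the gaps.

All sums over tuples are handled by recursions on the last time, with the parameter `i` entering as in
Pascal's rule.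
-/

open Finset
open scoped Classical

/-! ### Elementary symmetric sums and the walk -/

/-- The elementary symmetric sum of degree `k` in the entries of `z`. -/
noncomputable def elemSum {n : ℕ} (k : ℕ) (z : Fin n → ℝ) : ℝ :=
  ∑ s ∈ (univ : Finset (Fin n)).powersetCard k, ∏ i ∈ s, z i

lemma elemSum_zero {n : ℕ} (z : Fin n → ℝ) : elemSum 0 z = 1 := by
  simp [elemSum]

/-- An index set of size `k + 1` either avoids the last index or consists of it and `k` earlier
indices. -/
lemma elemSum_succ {n : ℕ} (k : ℕ) (z : Fin (n + 1) → ℝ) :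
    elemSum (k + 1) z = elemSum (k + 1) (fun i : Fin n => z i.castSucc) +
      z (Fin.last n) * elemSum k (fun i : Fin n => z i.castSucc) := by
  unfold elemSum
  have hl : Fin.last n ∉ (univ : Finset (Fin n)).map Fin.castSuccEmb := by
    simp [Fin.castSucc_ne_last]
  have hl' : ∀ j, ∀ s ∈ ((univ : Finset (Fin n)).map Fin.castSuccEmb).powersetCard j,
      Fin.last n ∉ s := fun j s hs h => hl ((mem_powersetCard.1 hs).1 h)
  rw [Fin.univ_castSuccEmb, Finset.cons_eq_insert, powersetCard_succ_insert hl, sum_union,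
    sum_image]
  · congr 1
    · rw [powersetCard_map, sum_map]
      simp [prod_map]
    · rw [sum_congr rfl fun s hs => prod_insert (hl' _ s hs), ← mul_sum, powersetCard_map,
        sum_map]
      simp [prod_map]
  · intro s hs t ht h
    rw [← erase_insert (hl' _ s hs), ← erase_insert (hl' _ t ht)]
    exact congrArg (fun u => u.erase (Fin.last n)) h
  · rw [disjoint_left]
    intro s hs h
    obtain ⟨t, -, rfl⟩ := mem_image.1 h
    exact hl' _ _ hs (mem_insert_self _ _)

lemma sum_strictMono_eq_elemSum {n k : ℕ} (z : Fin n → ℝ) :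
    ∑ w ∈ univ.filter (fun w : Fin k → Fin n => StrictMono w), ∏ j, z (w j) =
      elemSum k z := by
  unfold elemSum
  refine sum_bij (fun w _ => univ.image w) ?_ ?_ ?_ ?_
  · intro w hw
    have hw := (mem_filter.1 hw).2
    simp [mem_powersetCard, card_image_of_injective _ hw.injective]
  · intro w hw w' hw' h
    have hw := (mem_filter.1 hw).2
    have hw' := (mem_filter.1 hw').2
    refine (hw.range_inj hw').1 ?_
    have := congrArg (fun s : Finset (Fin n) => (s : Set (Fin n))) h
    simpa using this
  · intro s hs
    have hc := (mem_powersetCard.1 hs).2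
    refine ⟨s.orderEmbOfFin hc, by simpa using (s.orderEmbOfFin hc).strictMono, ?_⟩
    ext x
    simp
  · intro w hw
    have hw := (mem_filter.1 hw).2
    rw [prod_image fun a _ b _ h => hw.injective h]

section Walk

variable {V : Type*} [Fintype V]

lemma walkProb_snoc (A : Matrix V V ℝ) {m : ℕ} (y : Fin (m + 1) → V) (v : V) :
    walkProb A (Fin.snoc y v : Fin (m + 2) → V) = walkProb A y * A (y (Fin.last m)) v := by
  unfold walkProb
  rw [if_neg (by omega), if_neg (by omega), mul_assoc]
  congr 1
  rw [Fin.prod_univ_castSucc, Fin.prod_univ_castSucc, Fin.prod_univ_castSucc]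
  have e : ∀ (i : ℕ) (h : i < m + 2) (h' : i < m + 1),
      (Fin.snoc y v : Fin (m + 2) → V) ⟨i, h⟩ = y ⟨i, h'⟩ := by
    intro i h h'
    exact Fin.snoc_castSucc (α := fun _ => V) v y ⟨i, h'⟩
  have e2 : (Fin.snoc y v : Fin (m + 2) → V) ⟨m + 1, by omega⟩ = v :=
    Fin.snoc_last (α := fun _ => V) v y
  simp only [Fin.val_castSucc, Fin.val_last, lt_irrefl, dite_false, mul_one]
  rw [dif_pos (by omega : m + 1 < m + 1 + 1), e2, Fin.snoc_castSucc]
  congr 1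
  refine prod_congr rfl fun i _ => ?_
  rw [dif_pos (by omega), dif_pos (by omega), Fin.snoc_castSucc, e _ _ (by omega)]

/-- Conditioning on all but the last step of the walk. -/
lemma walkExp_snoc (A : Matrix V V ℝ) {m : ℕ} (F : (Fin (m + 2) → V) → ℝ) :
    walkExp A F = walkExp A (fun y : Fin (m + 1) → V =>
      ∑ v, A (y (Fin.last m)) v * F (Fin.snoc y v)) := by
  unfold walkExp
  rw [← (Fin.snocEquiv fun _ : Fin (m + 2) => V).sum_comp, Fintype.sum_prod_type,
    sum_comm]
  refine sum_congr rfl fun y _ => ?_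
  rw [mul_sum]
  refine sum_congr rfl fun v _ => ?_
  have : (Fin.snocEquiv fun _ : Fin (m + 2) => V) (v, y) = (Fin.snoc y v : Fin (m + 2) → V) := rfl
  rw [this, walkProb_snoc]
  ring

/-- `hitVec A f k t v` is `|V|` times the expected `k`-fold increasing-tuple sum over the times
before `t`, restricted to trajectories with `Y_t = v`. It is given by the recursion on the last
time `s < t` of the tuple. -/
noncomputable def hitVec [DecidableEq V] (A : Matrix V V ℝ) (f : ℕ → V → ℝ) : ℕ → ℕ → V → ℝ
  | 0, _ => 1
  | k + 1, t => ∑ s ∈ range t, (A ^ (t - s)).mulVec (f s * hitVec A f k s)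

/-- The analogue of `hitVec` in which the time `t` itself is also available to the tuple. -/
noncomputable def hitVecIncl [DecidableEq V] (A : Matrix V V ℝ) (f : ℕ → V → ℝ) :
    ℕ → ℕ → V → ℝ
  | 0, _ => 1
  | k + 1, t => ∑ s ∈ range (t + 1), (A ^ (t - s)).mulVec (f s * hitVec A f k s)

lemma hitVec_succ_time [DecidableEq V] {A : Matrix V V ℝ} (hrow : A.mulVec 1 = 1)
    (f : ℕ → V → ℝ) (k t : ℕ) :
    hitVec A f k (t + 1) = A.mulVec (hitVecIncl A f k t) := by
  cases k with
  | zero => simp [hitVec, hitVecIncl, hrow]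
  | succ k =>
    simp only [hitVec, hitVecIncl, Matrix.mulVec_sum]
    refine sum_congr rfl fun s hs => ?_
    have : s ≤ t := by simpa [Nat.lt_succ_iff] using hs
    rw [Nat.succ_sub this, pow_succ', Matrix.mulVec_mulVec]

lemma hitVecIncl_succ [DecidableEq V] (A : Matrix V V ℝ) (f : ℕ → V → ℝ) (k t : ℕ) :
    hitVecIncl A f (k + 1) t = hitVec A f (k + 1) t + f t * hitVec A f k t := by
  simp [hitVecIncl, hitVec, sum_range_succ]

/-- The test function `g` makes the induction on the length possible: averaging over the last step
replaces `g` by `A g`. -/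
lemma walkExp_elemSum [DecidableEq V] [Nonempty V] {A : Matrix V V ℝ} (hrow : A.mulVec 1 = 1)
    (hsymm : ∀ u v, A u v = A v u) (f : ℕ → V → ℝ) (m : ℕ) :
    ∀ (k : ℕ) (g : V → ℝ),
      walkExp A (fun y : Fin (m + 1) → V => g (y (Fin.last m)) * elemSum k fun i => f i (y i)) =
        (∑ v, g v * hitVecIncl A f k m v) / Fintype.card V := by
  induction m with
  | zero =>
    intro k g
    unfold walkExp
    rw [← (Equiv.funUnique (Fin 1) V).symm.sum_comp, sum_div]
    refine sum_congr rfl fun v _ => ?_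
    have hw : walkProb A ((Equiv.funUnique (Fin 1) V).symm v) = 1 / Fintype.card V := by
      simp [walkProb]
    have h0 : ∀ (j : ℕ) (z : Fin 0 → ℝ), elemSum (j + 1) z = 0 := by
      intro j z
      rw [elemSum, powersetCard_eq_empty.2 (by simp), sum_empty]
    rw [hw]
    match k with
    | 0 => simp [elemSum_zero, hitVecIncl]; ring
    | 1 => simp [elemSum_succ, elemSum_zero, h0, hitVecIncl, hitVec]; ring
    | k + 2 => simp [elemSum_succ, h0, hitVecIncl, hitVec]
  | succ m ih =>
    intro k g
    have key : ∀ (h : V → ℝ) (j : ℕ),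
        (∑ u, (∑ v, A u v * h v) * hitVecIncl A f j m u) =
          ∑ v, h v * hitVec A f j (m + 1) v := by
      intro h j
      rw [hitVec_succ_time hrow]
      simp only [Matrix.mulVec, dotProduct, sum_mul, mul_sum]
      rw [sum_comm]
      refine sum_congr rfl fun v _ => sum_congr rfl fun u _ => ?_
      rw [hsymm u v]; ring
    rw [walkExp_snoc]
    cases k with
    | zero =>
      have := ih 0 (fun u => ∑ v, A u v * g v)
      rw [key] at this
      simp only [elemSum_zero, mul_one, Fin.snoc_last] at this ⊢
      rw [this]; rfl
    | succ k =>
      have t1 := ih (k + 1) (fun u => ∑ v, A u v * g v)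
      have t2 := ih k (fun u => ∑ v, A u v * (g v * f (m + 1) v))
      rw [key] at t1 t2
      have e : ∀ (y : Fin (m + 1) → V),
          ∑ v, A (y (Fin.last m)) v * (g ((Fin.snoc y v : Fin (m + 2) → V) (Fin.last (m + 1))) *
            elemSum (k + 1) fun i => f i ((Fin.snoc y v : Fin (m + 2) → V) i)) =
          (∑ v, A (y (Fin.last m)) v * g v) * (elemSum (k + 1) fun i => f i (y i)) +
          (∑ v, A (y (Fin.last m)) v * (g v * f (m + 1) v)) *
            (elemSum k fun i => f i (y i)) := by
        intro y
        rw [sum_mul, sum_mul, ← sum_add_distrib]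
        refine sum_congr rfl fun v _ => ?_
        rw [elemSum_succ]
        simp only [Fin.snoc_last, Fin.snoc_castSucc, Fin.val_last, Fin.val_castSucc]
        ring
      simp only [e]
      have hadd : ∀ F G : (Fin (m + 1) → V) → ℝ,
          walkExp A (fun y => F y + G y) = walkExp A F + walkExp A G := by
        intro F G
        simp [walkExp, mul_add, sum_add_distrib]
      rw [hadd, t1, t2, hitVecIncl_succ, ← add_div, ← sum_add_distrib]
      congr 1
      refine sum_congr rfl fun v _ => ?_
      simp only [Pi.add_apply, Pi.mul_apply]
      ring

end Walk

/-! ### Sums over gap patterns -/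

section Scalar

variable (m : ℕ → ℝ) (lam : ℝ)

/-- The sum over tuples of `k + 1` increasing times ending at `t`, and over the choices of `i` of
the `k` gaps, of the following product: `√(μ_first)` for the first time, `√(μ_s μ_u)` for each
chosen gap from `s` to `u`, and `λ ^ (u - s)` for each other gap. -/
noncomputable def gapSum : ℕ → ℕ → ℕ → ℝ
  | 0, 0, t => √(m t)
  | 0, _ + 1, _ => 0
  | k + 1, 0, t => ∑ s ∈ range t, lam ^ (t - s) * gapSum k 0 s
  | k + 1, i + 1, t => √(m t) * (∑ s ∈ range t, √(m s) * gapSum k i s) +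
      ∑ s ∈ range t, lam ^ (t - s) * gapSum k (i + 1) s

/-- The version of `gapSum` weighted by `μ` at the first time of each block, a block being a
maximal run of times joined by `λ`-gaps. -/
noncomputable def startSum : ℕ → ℕ → ℕ → ℝ
  | 0, 0, t => m t
  | 0, _ + 1, _ => 0
  | k + 1, 0, t => ∑ s ∈ range t, lam ^ (t - s) * startSum k 0 s
  | k + 1, i + 1, t => m t * (∑ s ∈ range t, startSum k i s) +
      ∑ s ∈ range t, lam ^ (t - s) * startSum k (i + 1) s

/-- The version of `gapSum` weighted by `μ` at the last time of each block, except that the block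
ending at the final time `t` is not yet weighted. -/
noncomputable def endSum : ℕ → ℕ → ℕ → ℝ
  | 0, 0, _ => 1
  | 0, _ + 1, _ => 0
  | k + 1, 0, t => ∑ s ∈ range t, lam ^ (t - s) * endSum k 0 s
  | k + 1, i + 1, t => (∑ s ∈ range t, m s * endSum k i s) +
      ∑ s ∈ range t, lam ^ (t - s) * endSum k (i + 1) s

variable {m lam}

lemma startSum_nonneg (hm : ∀ t, 0 ≤ m t) (hl : 0 ≤ lam) :
    ∀ k i t, 0 ≤ startSum m lam k i t := by
  intro k
  induction k with
  | zero => intro i t; cases i <;> simp [startSum, hm]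
  | succ k ih =>
    intro i t
    have h : ∀ j, 0 ≤ ∑ s ∈ range t, lam ^ (t - s) * startSum m lam k j s := fun j =>
      sum_nonneg fun s _ => mul_nonneg (pow_nonneg hl _) (ih _ _)
    cases i with
    | zero => exact h 0
    | succ i => exact add_nonneg (mul_nonneg (hm t) (sum_nonneg fun s _ => ih _ _)) (h _)

lemma endSum_nonneg (hm : ∀ t, 0 ≤ m t) (hl : 0 ≤ lam) :
    ∀ k i t, 0 ≤ endSum m lam k i t := by
  intro k
  induction k with
  | zero => intro i t; cases i <;> simp [endSum]
  | succ k ih =>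
    intro i t
    have h : ∀ j, 0 ≤ ∑ s ∈ range t, lam ^ (t - s) * endSum m lam k j s := fun j =>
      sum_nonneg fun s _ => mul_nonneg (pow_nonneg hl _) (ih _ _)
    cases i with
    | zero => exact h 0
    | succ i => exact add_nonneg (sum_nonneg fun s _ => mul_nonneg (hm s) (ih _ _)) (h _)

lemma gapSum_eq_zero : ∀ k i t, k < i → gapSum m lam k i t = 0 := by
  intro k
  induction k with
  | zero => intro i t h; cases i with
    | zero => omega
    | succ i => rfl
  | succ k ih =>
    intro i t h
    cases i with
    | zero => omega
    | succ i =>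
      rw [gapSum, sum_eq_zero, sum_eq_zero]
      · simp
      · intro s _; rw [ih _ _ (by omega), mul_zero]
      · intro s _; rw [ih _ _ (by omega), mul_zero]

/-- Weighted Cauchy–Schwarz for a sequence `u` already dominated by `√p √q`. -/
lemma sum_mul_le_sqrt (a b p q u : ℕ → ℝ) (T : Finset ℕ) (ha : ∀ s, 0 ≤ a s)
    (hb : ∀ s, 0 ≤ b s) (hp : ∀ s, 0 ≤ p s) (hq : ∀ s, 0 ≤ q s)
    (hu : ∀ s, u s ≤ √(p s) * √(q s)) :
    ∑ s ∈ T, √(a s) * √(b s) * u s ≤ √(∑ s ∈ T, a s * p s) * √(∑ s ∈ T, b s * q s) := by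
  refine le_trans (sum_le_sum fun s _ => ?_)
    (Real.sum_sqrt_mul_sqrt_le T (fun s => mul_nonneg (ha s) (hp s))
      (fun s => mul_nonneg (hb s) (hq s)))
  rw [Real.sqrt_mul (ha s), Real.sqrt_mul (hb s)]
  calc _ ≤ √(a s) * √(b s) * (√(p s) * √(q s)) := by gcongr; exact hu s
    _ = _ := by ring

lemma sqrt_mul_add_le {a b c d : ℝ} (ha : 0 ≤ a) (hb : 0 ≤ b) (hc : 0 ≤ c) (hd : 0 ≤ d) :
    √a * √b + √c * √d ≤ √(a + c) * √(b + d) := by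
  have := Real.sum_sqrt_mul_sqrt_le (univ : Finset (Fin 2)) (f := ![a, c]) (g := ![b, d])
    (by intro i; fin_cases i <;> simpa) (by intro i; fin_cases i <;> simpa)
  simpa [Fin.sum_univ_two] using this

/-- Cauchy–Schwarz: the geometric mean weights are controlled by the start and end weights. -/
lemma gapSum_le (hm : ∀ t, 0 ≤ m t) (hl : 0 ≤ lam) : ∀ k i t,
    gapSum m lam k i t ≤ √(startSum m lam k i t) * √(endSum m lam k i t) := by
  intro k
  induction k with
  | zero => intro i t; cases i <;> simp [gapSum, startSum, endSum]
  | succ k ih =>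
    intro i t
    have hp := startSum_nonneg hm hl
    have hq := endSum_nonneg hm hl
    have hgap : ∀ j, ∑ s ∈ range t, lam ^ (t - s) * gapSum m lam k j s ≤
        √(∑ s ∈ range t, lam ^ (t - s) * startSum m lam k j s) *
          √(∑ s ∈ range t, lam ^ (t - s) * endSum m lam k j s) := by
      intro j
      have := sum_mul_le_sqrt (fun s => lam ^ (t - s)) (fun s => lam ^ (t - s))
        (startSum m lam k j) (endSum m lam k j) (gapSum m lam k j) (range t)
        (fun s => pow_nonneg hl _) (fun s => pow_nonneg hl _) (hp k j) (hq k j) (ih j)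
      simpa only [Real.mul_self_sqrt (pow_nonneg hl _)] using this
    cases i with
    | zero => exact hgap 0
    | succ i =>
      rw [gapSum, startSum, endSum]
      have hS := sum_mul_le_sqrt (fun _ => 1) m
        (startSum m lam k i) (endSum m lam k i) (gapSum m lam k i) (range t)
        (fun s => zero_le_one) hm (hp k i) (hq k i) (ih i)
      simp only [Real.sqrt_one, one_mul] at hS
      refine le_trans (add_le_add (mul_le_mul_of_nonneg_left hS (Real.sqrt_nonneg _))
        (hgap (i + 1))) ?_
      rw [← mul_assoc, ← Real.sqrt_mul (hm t)]
      refine sqrt_mul_add_le ?_ ?_ ?_ ?_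
      · exact mul_nonneg (hm t) (sum_nonneg fun s _ => hp _ _ _)
      · exact sum_nonneg fun s _ => mul_nonneg (hm s) (hq _ _ _)
      · exact sum_nonneg fun s _ => mul_nonneg (pow_nonneg hl _) (hp _ _ _)
      · exact sum_nonneg fun s _ => mul_nonneg (pow_nonneg hl _) (hq _ _ _)

lemma geom_gap_le (hl : 0 ≤ lam) (hl1 : lam < 1) (T : ℕ) :
    ∑ g ∈ range T, lam ^ (g + 1) ≤ lam / (1 - lam) := by
  simp only [pow_succ]
  rw [← sum_mul, div_eq_mul_inv, mul_comm]
  gcongr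
  rw [← tsum_geometric_of_lt_one hl hl1]
  exact (summable_geometric_of_lt_one hl hl1).sum_le_tsum _ fun _ _ => pow_nonneg hl _

lemma geom_past_le (hl : 0 ≤ lam) (hl1 : lam < 1) (t : ℕ) :
    ∑ s ∈ range t, lam ^ (t - s) ≤ lam / (1 - lam) := by
  refine le_trans (le_of_eq ?_) (geom_gap_le hl hl1 t)
  rw [← sum_range_reflect]
  refine sum_congr rfl fun s hs => ?_
  have := mem_range.1 hs
  congr 1; omega

/-- Summing over the later endpoint of a `λ`-gap costs a factor of at most `λ/(1-λ)`. -/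
lemma sum_gap_le (hl : 0 ≤ lam) (hl1 : lam < 1) (p : ℕ → ℝ) (hp : ∀ s, 0 ≤ p s) (T : ℕ) :
    ∑ t ∈ range T, ∑ s ∈ range t, lam ^ (t - s) * p s ≤
      lam / (1 - lam) * ∑ s ∈ range T, p s := by
  rw [sum_sigma', mul_sum]
  rw [sum_bij' (t := (range T).sigma fun s => range (T - 1 - s))
    (g := fun x : (_ : ℕ) × ℕ => lam ^ (x.2 + 1) * p x.1)
    (fun (x : (_ : ℕ) × ℕ) _ => (⟨x.2, x.1 - x.2 - 1⟩ : (_ : ℕ) × ℕ))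
    (fun (x : (_ : ℕ) × ℕ) _ => (⟨x.1 + x.2 + 1, x.1⟩ : (_ : ℕ) × ℕ))]
  · rw [sum_sigma]
    refine sum_le_sum fun s _ => ?_
    simp only
    rw [← sum_mul]
    exact mul_le_mul_of_nonneg_right (geom_gap_le hl hl1 _) (hp s)
  · rintro ⟨t, s⟩ h; simp only [mem_sigma, mem_range] at h ⊢; omega
  · rintro ⟨t, s⟩ h; simp only [mem_sigma, mem_range] at h ⊢; omega
  · rintro ⟨t, s⟩ h; simp only [mem_sigma, mem_range] at h
    simp only [Sigma.mk.injEq, heq_eq_eq, and_true]; omega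
  · rintro ⟨t, s⟩ h; simp only [mem_sigma, mem_range] at h
    simp only [Sigma.mk.injEq, heq_eq_eq, true_and]; omega
  · rintro ⟨t, s⟩ h; simp only [mem_sigma, mem_range] at h
    simp only
    congr 2; omega

lemma pow_add_mul_le {a b : ℝ} (ha : 0 ≤ a) (hb : 0 ≤ b) (i : ℕ) :
    a ^ (i + 1) + (i + 1) * (b * a ^ i) ≤ (a + b) ^ (i + 1) := by
  induction i with
  | zero => simp
  | succ i ih =>
    rw [pow_succ (a + b)]
    refine le_trans ?_ (mul_le_mul_of_nonneg_right ih (add_nonneg ha hb))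
    have : 0 ≤ ((i : ℝ) + 1) * (b * a ^ i) * b := by positivity
    push_cast
    ring_nf at this ⊢
    linarith

/-- Discrete form of `∫ Φ^i dΦ = Φ^(i+1)/(i+1)`. -/
lemma sum_mul_pow_le (hm : ∀ t, 0 ≤ m t) (i T : ℕ) :
    ∑ t ∈ range T, m t * ((∑ s ∈ range t, m s) ^ i / (i.factorial : ℝ)) ≤
      (∑ s ∈ range T, m s) ^ (i + 1) / ((i + 1).factorial : ℝ) := by
  induction T with
  | zero => simp
  | succ T ih =>
    rw [sum_range_succ, sum_range_succ (fun s => m s)]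
    have h := pow_add_mul_le (sum_nonneg fun s (_ : s ∈ range T) => hm s) (hm T) i
    refine le_trans (add_le_add_left ih _) ?_
    have hf : (0 : ℝ) < i.factorial := by positivity
    rw [Nat.factorial_succ]
    push_cast
    calc _ = ((∑ s ∈ range T, m s) ^ (i + 1) + (i + 1) * (m T * (∑ s ∈ range T, m s) ^ i)) /
          (((i : ℝ) + 1) * i.factorial) := by field_simp
      _ ≤ _ := by gcongr

/-- Pascal's rule with the powers of `r` attached. -/
lemma choose_pow_rec (k i : ℕ) (r : ℝ) :
    (k.choose i : ℝ) * r ^ (k - i) + (k.choose (i + 1) : ℝ) * r ^ (k - (i + 1)) * r =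
      ((k + 1).choose (i + 1) : ℝ) * r ^ (k + 1 - (i + 1)) := by
  rw [Nat.choose_succ_succ, Nat.add_sub_add_right]
  push_cast
  rcases lt_or_ge i k with h | h
  · rw [mul_assoc, ← pow_succ, show k - (i + 1) + 1 = k - i by omega]
    ring
  · rw [Nat.choose_eq_zero_of_lt (show k < i + 1 by omega)]
    simp

/-- The block starts increase, which gives `Φ^(i+1)/(i+1)!`, and each `λ`-gap sums to at most
`λ/(1-λ)`; the binomial coefficient counts the positions of the blocks. -/
lemma sum_startSum_le (hm : ∀ t, 0 ≤ m t) (hl : 0 ≤ lam) (hl1 : lam < 1) : ∀ k i T,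
    ∑ t ∈ range T, startSum m lam k i t ≤ (k.choose i : ℝ) * (lam / (1 - lam)) ^ (k - i) *
      ((∑ s ∈ range T, m s) ^ (i + 1) / ((i + 1).factorial : ℝ)) := by
  have hr : 0 ≤ lam / (1 - lam) := div_nonneg hl (by linarith)
  intro k
  induction k with
  | zero => intro i T; cases i <;> simp [startSum]
  | succ k ih =>
    intro i T
    have hgap : ∀ j, _ := fun j => (sum_gap_le hl hl1 _ (startSum_nonneg hm hl k j) T).trans
      (mul_le_mul_of_nonneg_left (ih j T) hr)
    cases i with
    | zero =>
      refine (hgap 0).trans (le_of_eq ?_)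
      simp only [Nat.choose_zero_right, Nat.sub_zero, pow_succ]
      ring
    | succ i =>
      simp only [startSum]
      rw [sum_add_distrib, ← choose_pow_rec, add_mul]
      refine add_le_add ?_ ((hgap (i + 1)).trans (le_of_eq (by ring)))
      calc _ ≤ ∑ t ∈ range T, m t * ((k.choose i : ℝ) * (lam / (1 - lam)) ^ (k - i) *
              ((∑ s ∈ range t, m s) ^ (i + 1) / ((i + 1).factorial : ℝ))) :=
            sum_le_sum fun t _ => mul_le_mul_of_nonneg_left (ih i t) (hm t)
        _ = (k.choose i : ℝ) * (lam / (1 - lam)) ^ (k - i) * ∑ t ∈ range T, m t *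
              ((∑ s ∈ range t, m s) ^ (i + 1) / ((i + 1).factorial : ℝ)) := by
            rw [mul_sum]; exact sum_congr rfl fun t _ => by ring
        _ ≤ _ := mul_le_mul_of_nonneg_left (sum_mul_pow_le hm _ _) (by positivity)

/-- The counterpart of `sum_startSum_le` for the increasing block ends; the last block is open, so
only `i` ends strictly before `t` are weighted. -/
lemma endSum_le (hm : ∀ t, 0 ≤ m t) (hl : 0 ≤ lam) (hl1 : lam < 1) : ∀ k i t,
    endSum m lam k i t ≤ (k.choose i : ℝ) * (lam / (1 - lam)) ^ (k - i) *
      ((∑ s ∈ range t, m s) ^ i / (i.factorial : ℝ)) := by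
  have hr : 0 ≤ lam / (1 - lam) := div_nonneg hl (by linarith)
  intro k
  induction k with
  | zero => intro i t; cases i <;> simp [endSum]
  | succ k ih =>
    intro i t
    have hgap : ∀ j, ∑ s ∈ range t, lam ^ (t - s) * endSum m lam k j s ≤
        lam / (1 - lam) * ((k.choose j : ℝ) * (lam / (1 - lam)) ^ (k - j) *
          ((∑ s ∈ range t, m s) ^ j / (j.factorial : ℝ))) := by
      intro j
      have h0 : 0 ≤ ∑ s ∈ range t, m s := sum_nonneg fun s _ => hm s
      refine le_trans ?_ (mul_le_mul_of_nonneg_right (geom_past_le hl hl1 t) (by positivity))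
      rw [sum_mul]
      refine sum_le_sum fun s hs => mul_le_mul_of_nonneg_left ((ih j s).trans ?_)
        (pow_nonneg hl _)
      have h0 : 0 ≤ ∑ s ∈ range s, m s := sum_nonneg fun s _ => hm s
      have h1 : ∑ u ∈ range s, m u ≤ ∑ u ∈ range t, m u :=
        sum_le_sum_of_subset_of_nonneg (range_subset_range.2 (mem_range.1 hs).le)
          fun u _ _ => hm u
      gcongr
    cases i with
    | zero =>
      refine (hgap 0).trans (le_of_eq ?_)
      simp only [Nat.choose_zero_right, Nat.sub_zero, pow_succ]
      ring
    | succ i =>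
      rw [endSum, ← choose_pow_rec, add_mul]
      refine add_le_add ?_ ((hgap (i + 1)).trans (le_of_eq (by ring)))
      calc _ ≤ ∑ s ∈ range t, m s * ((k.choose i : ℝ) * (lam / (1 - lam)) ^ (k - i) *
              ((∑ u ∈ range s, m u) ^ i / (i.factorial : ℝ))) :=
            sum_le_sum fun s _ => mul_le_mul_of_nonneg_left (ih i s) (hm s)
        _ = (k.choose i : ℝ) * (lam / (1 - lam)) ^ (k - i) * ∑ s ∈ range t, m s *
              ((∑ u ∈ range s, m u) ^ i / (i.factorial : ℝ)) := by
            rw [mul_sum]; exact sum_congr rfl fun t _ => by ring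
        _ ≤ _ := mul_le_mul_of_nonneg_left (sum_mul_pow_le hm _ _) (by positivity)

/-- Summing `gapSum` over the final time: Cauchy–Schwarz turns it into the start and end weights,
both of whose sums satisfy the same bound. -/
lemma sum_sqrt_mul_gapSum_le (hm : ∀ t, 0 ≤ m t) (hl : 0 ≤ lam) (hl1 : lam < 1) (k i T : ℕ) :
    ∑ t ∈ range T, √(m t) * gapSum m lam k i t ≤
      (k.choose i : ℝ) * (lam / (1 - lam)) ^ (k - i) *
        ((∑ s ∈ range T, m s) ^ (i + 1) / ((i + 1).factorial : ℝ)) := by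
  have hr : 0 ≤ lam / (1 - lam) := div_nonneg hl (by linarith)
  have h0 : 0 ≤ ∑ s ∈ range T, m s := sum_nonneg fun s _ => hm s
  set B := (k.choose i : ℝ) * (lam / (1 - lam)) ^ (k - i) *
        ((∑ s ∈ range T, m s) ^ (i + 1) / ((i + 1).factorial : ℝ)) with hB
  have hB0 : 0 ≤ B := by positivity
  have hq : ∑ t ∈ range T, m t * endSum m lam k i t ≤ B := by
    calc _ ≤ ∑ t ∈ range T, m t * ((k.choose i : ℝ) * (lam / (1 - lam)) ^ (k - i) *
              ((∑ s ∈ range t, m s) ^ i / (i.factorial : ℝ))) :=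
            sum_le_sum fun t _ => mul_le_mul_of_nonneg_left (endSum_le hm hl hl1 k i t) (hm t)
      _ = (k.choose i : ℝ) * (lam / (1 - lam)) ^ (k - i) * ∑ t ∈ range T, m t *
              ((∑ s ∈ range t, m s) ^ i / (i.factorial : ℝ)) := by
            rw [mul_sum]; exact sum_congr rfl fun t _ => by ring
      _ ≤ _ := mul_le_mul_of_nonneg_left (sum_mul_pow_le hm _ _) (by positivity)
  have hS := sum_mul_le_sqrt (fun _ => 1) m
    (startSum m lam k i) (endSum m lam k i) (gapSum m lam k i) (range T)
    (fun s => zero_le_one) hm (startSum_nonneg hm hl k i) (endSum_nonneg hm hl k i)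
    (gapSum_le hm hl k i)
  simp only [Real.sqrt_one, one_mul] at hS
  refine hS.trans ?_
  calc _ ≤ √B * √B := by
        gcongr
        exact sum_startSum_le hm hl hl1 k i T
    _ = B := Real.mul_self_sqrt hB0

/-- Summed over the number of rank-one gaps, `gapSum` obeys the recursion with the full gap factor
`√(μ_s μ_t) + λ ^ (t - s)`. -/
lemma sum_gapSum_succ (k t : ℕ) :
    ∑ i ∈ range (k + 2), gapSum m lam (k + 1) i t =
      ∑ s ∈ range t, (√(m t) * √(m s) + lam ^ (t - s)) *
        ∑ i ∈ range (k + 1), gapSum m lam k i s := by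
  have h : ∑ s ∈ range t, lam ^ (t - s) * ∑ i ∈ range (k + 1), gapSum m lam k i s =
      (∑ i ∈ range (k + 1), ∑ s ∈ range t, lam ^ (t - s) * gapSum m lam k (i + 1) s) +
        ∑ s ∈ range t, lam ^ (t - s) * gapSum m lam k 0 s := by
    rw [sum_comm, ← sum_add_distrib]
    refine sum_congr rfl fun s _ => ?_
    rw [← mul_sum, ← mul_add, ← sum_range_succ' (fun i => gapSum m lam k i s), sum_range_succ _ (k + 1),
      gapSum_eq_zero k (k + 1) s (by omega), add_zero]
  have h2 : ∑ s ∈ range t, √(m t) * √(m s) * ∑ i ∈ range (k + 1), gapSum m lam k i s =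
      ∑ i ∈ range (k + 1), √(m t) * ∑ s ∈ range t, √(m s) * gapSum m lam k i s := by
    simp only [mul_sum]
    rw [sum_comm]
    exact sum_congr rfl fun i _ => sum_congr rfl fun s _ => by ring
  simp only [add_mul, sum_add_distrib]
  rw [h, h2, sum_range_succ']
  simp only [gapSum, sum_add_distrib]
  ring

end Scalar

/-! ### Norm estimates -/

section Vectors

variable {V : Type*} [Fintype V]

/-- The Euclidean norm of a function on `V`. -/
noncomputable def vecNorm (x : V → ℝ) : ℝ := ‖WithLp.toLp 2 x‖

lemma vecNorm_eq (x : V → ℝ) : vecNorm x = √(∑ v, x v ^ 2) := by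
  simp [vecNorm, EuclideanSpace.norm_eq]

lemma vecNorm_sum_le (T : Finset ℕ) (x : ℕ → V → ℝ) :
    vecNorm (∑ s ∈ T, x s) ≤ ∑ s ∈ T, vecNorm (x s) := by
  unfold vecNorm
  rw [WithLp.toLp_sum]
  exact norm_sum_le _ _

lemma vecNorm_add_le (x y : V → ℝ) : vecNorm (x + y) ≤ vecNorm x + vecNorm y := by
  unfold vecNorm
  rw [WithLp.toLp_add]
  exact norm_add_le _ _

lemma vecNorm_smul (c : ℝ) (x : V → ℝ) : vecNorm (c • x) = |c| * vecNorm x := by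
  unfold vecNorm
  rw [WithLp.toLp_smul, norm_smul, Real.norm_eq_abs]

lemma vecNorm_mul_le {h : V → ℝ} (h0 : ∀ v, 0 ≤ h v) (h1 : ∀ v, h v ≤ 1) (x : V → ℝ) :
    vecNorm (h * x) ≤ vecNorm x := by
  rw [vecNorm_eq, vecNorm_eq]
  refine Real.sqrt_le_sqrt (sum_le_sum fun v _ => ?_)
  rw [Pi.mul_apply, mul_pow]
  exact mul_le_of_le_one_left (sq_nonneg _) (pow_le_one₀ (h0 v) (h1 v))

lemma abs_sum_mul_le (x y : V → ℝ) : |∑ v, x v * y v| ≤ vecNorm x * vecNorm y := by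
  have := abs_real_inner_le_norm (WithLp.toLp 2 y) (WithLp.toLp 2 x)
  rw [mul_comm] at this
  simpa [vecNorm, PiLp.inner_apply] using this

lemma opNorm_nonneg [DecidableEq V] (M : Matrix V V ℝ) : 0 ≤ opNorm M := norm_nonneg _

lemma vecNorm_mulVec_le [DecidableEq V] (M : Matrix V V ℝ) (x : V → ℝ) :
    vecNorm (M.mulVec x) ≤ opNorm M * vecNorm x :=
  (LinearMap.toContinuousLinearMap (Matrix.toEuclideanLin M)).le_opNorm (WithLp.toLp 2 x)

lemma vecNorm_pow_mulVec_le [DecidableEq V] (M : Matrix V V ℝ) (g : ℕ) (x : V → ℝ) :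
    vecNorm ((M ^ g).mulVec x) ≤ opNorm M ^ g * vecNorm x := by
  induction g with
  | zero => simp
  | succ g ih =>
    rw [pow_succ', ← Matrix.mulVec_mulVec, pow_succ', mul_assoc]
    exact (vecNorm_mulVec_le M _).trans (mul_le_mul_of_nonneg_left ih (opNorm_nonneg M))

/-- `A ^ g` is the averaging matrix `J` plus the `g`-th power of the deviation `A - J`. -/
lemma pow_eq_avg_add [DecidableEq V] {A J : Matrix V V ℝ} (hAJ : A * J = J) (hJA : J * A = J)
    (hJJ : J * J = J) (g : ℕ) : A ^ (g + 1) = J + (A - J) ^ (g + 1) := by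
  induction g with
  | zero => simp
  | succ g ih =>
    have h : J * (A - J) ^ (g + 1) = 0 := by
      rw [pow_succ', ← mul_assoc, mul_sub, hJA, hJJ, sub_self, zero_mul]
    rw [pow_succ', ih, pow_succ' (A - J) (g + 1), mul_add, hAJ, sub_mul, h, sub_zero]

lemma avg_mul_self [Nonempty V] {J : Matrix V V ℝ}
    (hJ : ∀ u v, J u v = 1 / (Fintype.card V : ℝ)) : J * J = J := by
  ext u v
  rw [Matrix.mul_apply]
  simp [hJ]

/-- The pointwise square root of `f i`. -/
noncomputable def sqrtVec (f : ℕ → V → ℝ) (i : ℕ) : V → ℝ := fun v => √(f i v)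

lemma vecNorm_sqrtVec [Nonempty V] {f : ℕ → V → ℝ} {m : ℕ → ℝ}
    (hf : ∀ i v, f i v ∈ Set.Icc (0 : ℝ) 1)
    (hm : ∀ i, m i = (∑ v, f i v) / (Fintype.card V : ℝ)) (i : ℕ) :
    vecNorm (sqrtVec f i) = √(Fintype.card V : ℝ) * √(m i) := by
  have hN : (0 : ℝ) < Fintype.card V := by exact_mod_cast Fintype.card_pos
  rw [vecNorm_eq, ← Real.sqrt_mul hN.le, hm, mul_div_cancel₀ _ hN.ne']
  congr 1
  exact sum_congr rfl fun v _ => Real.sq_sqrt (hf i v).1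

section Gap

variable [DecidableEq V] [Nonempty V] {A J : Matrix V V ℝ} {f : ℕ → V → ℝ} {m : ℕ → ℝ}

/-- One gap of the walk: `√f_t A^g √f_s` splits into a rank-one part of norm `√(μ_t μ_s)` and a
part of norm at most `λ ^ g`. -/
lemma vecNorm_gap_le (hJ : ∀ u v, J u v = 1 / (Fintype.card V : ℝ))
    (hAJ : A * J = J) (hJA : J * A = J) (hf : ∀ i v, f i v ∈ Set.Icc (0 : ℝ) 1)
    (hm : ∀ i, m i = (∑ v, f i v) / (Fintype.card V : ℝ)) (t s g : ℕ) (hg : 0 < g)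
    (y : V → ℝ) :
    vecNorm (sqrtVec f t * (A ^ g).mulVec (sqrtVec f s * y)) ≤
      (√(m t) * √(m s) + opNorm (A - J) ^ g) * vecNorm y := by
  have hN : (0 : ℝ) < Fintype.card V := by exact_mod_cast Fintype.card_pos
  have hs0 : ∀ i v, 0 ≤ sqrtVec f i v := fun i v => Real.sqrt_nonneg _
  have hs1 : ∀ i v, sqrtVec f i v ≤ 1 := fun i v => Real.sqrt_le_one.2 (hf i v).2
  obtain ⟨g, rfl⟩ : ∃ j, g = j + 1 := ⟨g - 1, by omega⟩
  have hsplit : sqrtVec f t * (A ^ (g + 1)).mulVec (sqrtVec f s * y) =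
      ((∑ v, sqrtVec f s v * y v) / (Fintype.card V : ℝ)) • sqrtVec f t +
        sqrtVec f t * ((A - J) ^ (g + 1)).mulVec (sqrtVec f s * y) := by
    rw [pow_eq_avg_add hAJ hJA (avg_mul_self hJ), Matrix.add_mulVec, mul_add]
    congr 1
    ext v
    simp only [Pi.mul_apply, Pi.smul_apply, Matrix.mulVec, dotProduct, hJ, smul_eq_mul]
    rw [← mul_sum]
    ring
  rw [hsplit, add_mul]
  refine (vecNorm_add_le _ _).trans (add_le_add ?_ ?_)
  · rw [vecNorm_smul, vecNorm_sqrtVec hf hm, abs_div, abs_of_pos hN]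
    have h := abs_sum_mul_le (sqrtVec f s) y
    rw [vecNorm_sqrtVec hf hm] at h
    calc _ ≤ (√(Fintype.card V : ℝ) * √(m s) * vecNorm y) / (Fintype.card V : ℝ) *
            (√(Fintype.card V : ℝ) * √(m t)) := by gcongr
      _ = (√(Fintype.card V : ℝ) * √(Fintype.card V : ℝ)) / (Fintype.card V : ℝ) *
            (√(m t) * √(m s) * vecNorm y) := by ring
      _ = _ := by rw [Real.mul_self_sqrt hN.le, div_self hN.ne', one_mul]
  · refine (vecNorm_mul_le (hs0 t) (hs1 t) _).trans ((vecNorm_pow_mulVec_le _ _ _).trans ?_)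
    exact mul_le_mul_of_nonneg_left (vecNorm_mul_le (hs0 s) (hs1 s) _)
      (pow_nonneg (opNorm_nonneg _) _)

/-- The triangle inequality along the recursion for `hitVec`, with `vecNorm_gap_le` at each gap. -/
lemma vecNorm_hitVec_le (hJ : ∀ u v, J u v = 1 / (Fintype.card V : ℝ))
    (hAJ : A * J = J) (hJA : J * A = J) (hf : ∀ i v, f i v ∈ Set.Icc (0 : ℝ) 1)
    (hm : ∀ i, m i = (∑ v, f i v) / (Fintype.card V : ℝ)) (k : ℕ) : ∀ t,
    vecNorm (sqrtVec f t * hitVec A f k t) ≤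
      √(Fintype.card V : ℝ) * ∑ i ∈ range (k + 1), gapSum m (opNorm (A - J)) k i t := by
  induction k with
  | zero =>
    intro t
    simp [hitVec, gapSum, vecNorm_sqrtVec hf hm]
  | succ k ih =>
    intro t
    have hff : ∀ s, f s * hitVec A f k s = sqrtVec f s * (sqrtVec f s * hitVec A f k s) := by
      intro s
      rw [← mul_assoc]
      congr 1
      ext v
      exact (Real.mul_self_sqrt (hf s v).1).symm
    rw [sum_gapSum_succ, hitVec, mul_sum, mul_sum]
    refine (vecNorm_sum_le _ _).trans (sum_le_sum fun s hs => ?_)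
    have hst := mem_range.1 hs
    rw [hff]
    refine (vecNorm_gap_le hJ hAJ hJA hf hm t s (t - s) (by omega) _).trans ?_
    rw [mul_left_comm]
    refine mul_le_mul_of_nonneg_left (ih s) (add_nonneg (by positivity)
      (pow_nonneg (opNorm_nonneg _) _))

lemma avg_mul_hitVec_le (hJ : ∀ u v, J u v = 1 / (Fintype.card V : ℝ))
    (hAJ : A * J = J) (hJA : J * A = J) (hf : ∀ i v, f i v ∈ Set.Icc (0 : ℝ) 1)
    (hm : ∀ i, m i = (∑ v, f i v) / (Fintype.card V : ℝ)) (k t : ℕ) :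
    (∑ v, f t v * hitVec A f k t v) / (Fintype.card V : ℝ) ≤
      √(m t) * ∑ i ∈ range (k + 1), gapSum m (opNorm (A - J)) k i t := by
  have hN : (0 : ℝ) < Fintype.card V := by exact_mod_cast Fintype.card_pos
  have h := (le_abs_self _).trans (abs_sum_mul_le (sqrtVec f t) (sqrtVec f t * hitVec A f k t))
  have e : ∑ v, f t v * hitVec A f k t v =
      ∑ v, sqrtVec f t v * (sqrtVec f t * hitVec A f k t) v := by
    refine sum_congr rfl fun v _ => ?_
    rw [Pi.mul_apply, ← mul_assoc, sqrtVec, Real.mul_self_sqrt (hf t v).1]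
  rw [e, div_le_iff₀ hN]
  refine h.trans ?_
  rw [vecNorm_sqrtVec hf hm]
  refine (mul_le_mul_of_nonneg_left (vecNorm_hitVec_le hJ hAJ hJA hf hm k t)
    (by positivity)).trans (le_of_eq ?_)
  have := Real.mul_self_sqrt hN.le
  calc _ = (√(Fintype.card V : ℝ) * √(Fintype.card V : ℝ)) * (√(m t) *
        ∑ i ∈ range (k + 1), gapSum m (opNorm (A - J)) k i t) := by ring
    _ = _ := by rw [this]; ring

end Gap

end Vectors

/-! ### The bound for the random walk -/

theorem expander_increasing_tuple_sum_bound
    {V : Type*} [Fintype V] [DecidableEq V] [Nonempty V]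
    (G : SimpleGraph V) [DecidableRel G.Adj] (d : ℕ) (hd : 0 < d)
    (hreg : G.IsRegularOfDegree d)
    (A : Matrix V V ℝ)
    (hA : ∀ u v, A u v = if G.Adj u v then (1 : ℝ) / d else 0)
    (J : Matrix V V ℝ) (hJ : ∀ u v, J u v = 1 / (Fintype.card V : ℝ))
    (lam : ℝ) (hlam : lam = opNorm (A - J)) (hlam1 : lam < 1)
    (n : ℕ) (f : Fin n → V → ℝ) (hf : ∀ i v, f i v ∈ Set.Icc (0 : ℝ) 1)
    (μ : Fin n → ℝ) (hμ : ∀ i, μ i = (∑ v, f i v) / (Fintype.card V : ℝ))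
    (Φ : ℝ) (hΦ : Φ = ∑ i, μ i)
    (k : ℕ) (hk : 1 ≤ k) (hkn : k ≤ n) :
    walkExp A (fun y =>
        ∑ w ∈ univ.filter fun w : Fin k → Fin n => StrictMono w,
          ∏ j, f (w j) (y (w j))) ≤
      ∑ i ∈ Finset.range k,
        (Nat.choose (k - 1) i : ℝ) * Φ ^ (i + 1) * lam ^ (k - i - 1) /
          ((Nat.factorial (i + 1) : ℝ) * (1 - lam) ^ (k - i - 1)) := by
  have hsymm : ∀ u v, A u v = A v u := by
    intro u v
    simp only [hA, G.adj_comm u v]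
  have hsum : ∀ u, ∑ v, A u v = 1 := by
    intro u
    have hd' : (d : ℝ) ≠ 0 := by positivity
    have hc : #{v | G.Adj u v} = d := by
      rw [← hreg u, ← G.card_neighborFinset_eq_degree, G.neighborFinset_eq_filter]
    simp only [hA]
    rw [← sum_filter, sum_const, hc, nsmul_eq_mul, mul_one_div_cancel hd']
  have hrow : A.mulVec 1 = 1 := by
    ext u
    simp [Matrix.mulVec, dotProduct, hsum]
  have hAJ : A * J = J := by
    ext u v
    simp only [Matrix.mul_apply, hJ]
    rw [← sum_mul, hsum, one_mul]
  have hJA : J * A = J := by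
    ext u v
    simp only [Matrix.mul_apply, hJ]
    rw [← mul_sum, sum_congr rfl fun w _ => hsymm w v, hsum, mul_one]
  obtain ⟨k, rfl⟩ : ∃ j, k = j + 1 := ⟨k - 1, by omega⟩
  obtain ⟨n, rfl⟩ : ∃ j, n = j + 1 := ⟨n - 1, by omega⟩
  -- Extend `f` by zero to all times.
  set F : ℕ → V → ℝ := fun i => if h : i < n + 1 then f ⟨i, h⟩ else 0 with hF
  have hFf : ∀ i : Fin (n + 1), F i = f i := fun i => dif_pos i.2
  have hF01 : ∀ i v, F i v ∈ Set.Icc (0 : ℝ) 1 := by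
    intro i v
    by_cases h : i < n + 1
    · rw [show F i = f ⟨i, h⟩ from dif_pos h]
      exact hf _ v
    · rw [show F i = 0 from dif_neg h]
      simp
  set m : ℕ → ℝ := fun i => (∑ v, F i v) / (Fintype.card V : ℝ) with hm
  have hm0 : ∀ t, 0 ≤ m t := fun t =>
    div_nonneg (sum_nonneg fun v _ => (hF01 t v).1) (Nat.cast_nonneg _)
  have hmΦ : ∑ t ∈ range (n + 1), m t = Φ := by
    rw [hΦ, ← Fin.sum_univ_eq_sum_range]
    refine sum_congr rfl fun i _ => ?_
    simp only [hm, hμ, hFf]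
  have hl0 : 0 ≤ lam := hlam ▸ opNorm_nonneg _
  have hcol : ∀ (g : ℕ) (x : V → ℝ), ∑ v, (A ^ g).mulVec x v = ∑ v, x v := by
    intro g x
    induction g with
    | zero => simp
    | succ g ih =>
      rw [pow_succ', ← Matrix.mulVec_mulVec, ← ih]
      simp only [Matrix.mulVec, dotProduct]
      rw [sum_comm]
      refine sum_congr rfl fun v _ => ?_
      rw [← sum_mul, sum_congr rfl fun w _ => hsymm w v, hsum, one_mul]
  have hE := walkExp_elemSum hrow hsymm F n (k + 1) (fun _ => 1)
  simp only [one_mul, hFf, ← sum_strictMono_eq_elemSum] at hE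
  rw [hE]
  have hI : (∑ v, hitVecIncl A F (k + 1) n v) / (Fintype.card V : ℝ) =
      ∑ t ∈ range (n + 1), (∑ v, F t v * hitVec A F k t v) / (Fintype.card V : ℝ) := by
    rw [← sum_div, hitVecIncl]
    simp only [Finset.sum_apply]
    rw [sum_comm]
    congr 1
    exact sum_congr rfl fun t _ => hcol _ _
  rw [hI]
  refine (sum_le_sum fun t _ =>
    avg_mul_hitVec_le hJ hAJ hJA hF01 (fun i => rfl : ∀ i, m i = _) k t).trans ?_
  simp only [← hlam, mul_sum]
  rw [sum_comm]
  refine sum_le_sum fun i _ => (sum_sqrt_mul_gapSum_le hm0 hl0 hlam1 k i (n + 1)).trans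
    (le_of_eq ?_)
  rw [hmΦ, Nat.add_sub_cancel, show k + 1 - i - 1 = k - i by omega, div_pow]
  ring
end
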